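/- There is no injective group homomorphism from the Gersten group into GL(4,ℂ). Consequently, for every field F and every d ≤ 4, there is no injective group homomorphism from the Gersten group into GL(d,F), i.e. the Gersten group has no faithful linear representation of dimension 4 or less over any field. -/

import Mathlib

open scoped MatrixGroups

/-!
Over an algebraically closed field, a representation of dimension at most four gives invertible
operators `A`, `B`, `C`, `T` such that `A` and `T` commute, `B` conjugates `A * T` to `T`, and `C`
conjugates `A ^ 2 * T` to `T`. If `(x, y)` runs over the joint eigenvalues of `(A, T)` with
multiplicity, then the values `y`, `x * y` and `x ^ 2 * y` form the same multiset. For any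
homomorphism `φ` from the multiplicative group of the field to `ℚ`, summing the identity
`2 φ(x)² = φ(x²y)² - 2 φ(xy)² + φ(y)²` yields `φ(x) = 0`, so every eigenvalue of `A` is a root of
unity. After passing to `N`-th powers `A` is unipotent, and the uniqueness of the Jordan
decomposition allows `T` to be replaced by its unipotent part without losing the relations.

In characteristic two a power of `A` is now trivial. Otherwise the kernels and ranges of the powers
of `T - 1` provide a flag of at most four steps which `B` and `C` preserve and `A - 1` lowers; the
three cases are `(T - 1) ^ 2 = 0`, a single Jordan block, and Jordan type `(3, 1)`. The commutators
of `A` with its conjugates by `B` and by `C` differ from `1` by operators lowering the flag two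
steps, so their commutator lowers it four steps and is trivial. Hence `⁅⁅a, bab⁻¹⁆, ⁅a, cac⁻¹⁆⁆`
dies in the representation once `a` is replaced by a suitable power. In the free group on `a`, `b`,
`c` it survives, as one sees in `SL(2, ℤ)` by sending `a`, `b`, `c` to `T`, `S`, `T * S`.
-/

namespace Gersten

open Module (End finrank)
open LinearMap (ker range)
open scoped commutatorElement

section DoubleCommutator

variable {G H : Type*} [Group G] [Group H]

/-- The word `⁅⁅a, bab⁻¹⁆, ⁅a, cac⁻¹⁆⁆`, which is nontrivial in the free group but is killed by
operators `a`, `b`, `c` such that `b` and `c` preserve, and `a - 1` lowers, a flag of four steps. -/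
def doubleCommutator (a b c : G) : G :=
  ⁅⁅a, b * a * b⁻¹⁆, ⁅a, c * a * c⁻¹⁆⁆

lemma map_doubleCommutator (f : G →* H) (a b c : G) :
    f (doubleCommutator a b c) = doubleCommutator (f a) (f b) (f c) := by
  simp only [doubleCommutator, map_commutatorElement, map_mul, map_inv]

lemma doubleCommutator_one_left (b c : G) : doubleCommutator 1 b c = 1 := by
  simp [doubleCommutator]

lemma doubleCommutator_mul_right_of_commute {a d : G} (h : Commute d a) (b : G) :
    doubleCommutator a b (d * b) = ⁅⁅a, b * a * b⁻¹⁆, d * ⁅a, b * a * b⁻¹⁆ * d⁻¹⁆ := by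
  have hd : d * a * d⁻¹ = a := by rw [h.eq, mul_inv_cancel_right]
  rw [doubleCommutator, conjugate_commutatorElement, hd]
  simp only [mul_inv_rev, mul_assoc]

end DoubleCommutator

section ModularGroup

open ModularGroup

lemma commutatorElement_conj_S_apply_one_zero {U : SL(2, ℤ)} {x : ℤ}
    (hU : (U : Matrix (Fin 2) (Fin 2) ℤ) = !![1, x; 0, 1]) : ⁅U, S * U * S⁻¹⁆ 1 0 = x ^ 3 := by
  have hV : (S * U * S⁻¹ : SL(2, ℤ)).1 = !![1, 0; -x, 1] := by simp [hU, coe_S]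
  generalize S * U * S⁻¹ = V at hV ⊢
  simp only [commutatorElement_def, Matrix.SpecialLinearGroup.coe_mul,
    Matrix.SpecialLinearGroup.coe_inv, hU, hV,
    Matrix.adjugate_fin_two_of, Matrix.mul_apply, Fin.sum_univ_two,
    Matrix.of_apply, Matrix.cons_val', Matrix.cons_val_zero, Matrix.cons_val_one,
    Matrix.cons_val_fin_one]
  ring

lemma apply_one_zero_eq_zero_of_commute_conj_T {M : SL(2, ℤ)}
    (h : Commute M (T * M * T⁻¹)) : M 1 0 = 0 := by
  have h₁₀ := congrArg (fun P : SL(2, ℤ) => P 1 0) h.eq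
  simp only [Matrix.SpecialLinearGroup.coe_mul, coe_T, coe_T_inv, Matrix.mul_apply,
    Fin.sum_univ_two, Matrix.of_apply, Matrix.cons_val', Matrix.cons_val_zero,
    Matrix.cons_val_one, Matrix.cons_val_fin_one] at h₁₀
  have : (2 : ℤ) * M 1 0 ^ 2 = 0 := by linear_combination h₁₀
  simpa using this

end ModularGroup

open ModularGroup in
lemma doubleCommutator_of_pow_ne_one {n : ℕ} (hn : n ≠ 0) :
    doubleCommutator (FreeGroup.of (0 : Fin 3) ^ n) (.of 1) (.of 2) ≠ 1 := by
  intro h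
  have hSL : doubleCommutator (T ^ n) S (T * S) = 1 := by
    simpa [map_doubleCommutator] using congrArg (FreeGroup.lift ![T, S, T * S]) h
  rw [doubleCommutator_mul_right_of_commute (Commute.self_pow _ n),
    commutatorElement_eq_one_iff_commute] at hSL
  have h₁₀ := apply_one_zero_eq_zero_of_commute_conj_T hSL
  rw [commutatorElement_conj_S_apply_one_zero (x := n) (by simpa using coe_T_zpow n)] at h₁₀
  exact hn (by simpa using h₁₀)

section Ring

variable {R : Type*} [Ring R]

lemma commutatorElement_sub_one (g h : Rˣ) :
    (⁅g, h⁆ : Rˣ) - (1 : R) = ((g - 1) * (h - 1) - (h - 1) * (g - 1)) * (↑g⁻¹ * ↑h⁻¹) := by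
  have : (g - 1) * (h - 1) - (h - 1) * (g - 1) = (g * h - h * g : R) := by noncomm_ring
  rw [this, sub_mul, mul_assoc (h : R), Units.mul_inv_cancel_left, Units.mul_inv]
  simp only [commutatorElement_def, Units.val_mul, mul_assoc]

lemma conj_sub_one (g a : Rˣ) : ↑(g * a * g⁻¹) - (1 : R) = g * (a - 1) * ↑g⁻¹ := by
  simp [mul_sub, sub_mul]

end Ring

section Lowering

variable {R V : Type*} [CommRing R] [AddCommGroup V] [Module R V]

/-- The endomorphisms lowering the flag `W` by `k` steps, i.e. mapping each `W i` into
`W (i - k)`; truncated subtraction makes `W 0` the target for `i ≤ k`. Steps add up under products,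
hence also for the differences `⁅g, h⁆ - 1`. -/
def lowering (W : ℕ → Submodule R V) (k : ℕ) : Submodule R (End R V) :=
  ⨅ i, (W i).compatibleMaps (W (i - k))

variable {W : ℕ → Submodule R V} {k l : ℕ}

lemma mem_lowering {Z : End R V} :
    Z ∈ lowering W k ↔ ∀ i, W i ≤ (W (i - k)).comap Z :=
  Submodule.mem_iInf _

lemma one_mem_lowering_zero : 1 ∈ lowering W 0 :=
  mem_lowering.2 fun _ _ hx => hx

lemma mul_mem_lowering {Y Z : End R V} (hY : Y ∈ lowering W k) (hZ : Z ∈ lowering W l) :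
    Y * Z ∈ lowering W (k + l) := by
  refine mem_lowering.2 fun i x hx => ?_
  rw [add_comm, ← Nat.sub_sub]
  exact mem_lowering.1 hY _ (mem_lowering.1 hZ _ hx)

lemma lowering_antitone (hW : Monotone W) : Antitone (lowering W) :=
  fun _ _ hkl _ hZ => mem_lowering.2 fun i =>
    (mem_lowering.1 hZ i).trans (Submodule.comap_mono (hW (Nat.sub_le_sub_left hkl i)))

lemma eq_zero_of_mem_lowering {n : ℕ} {Z : End R V} (hW₀ : W 0 = ⊥) (hWn : W n = ⊤)
    (hZ : Z ∈ lowering W n) : Z = 0 := by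
  ext x
  have hx := mem_lowering.1 hZ n (hWn ▸ Submodule.mem_top : x ∈ W n)
  rwa [Nat.sub_self, hW₀] at hx

lemma commutatorElement_sub_one_mem_lowering {g h : (End R V)ˣ}
    (hg : (g : End R V) - 1 ∈ lowering W k) (hh : (h : End R V) - 1 ∈ lowering W l)
    (hg' : (↑g⁻¹ : End R V) ∈ lowering W 0) (hh' : (↑h⁻¹ : End R V) ∈ lowering W 0) :
    ((⁅g, h⁆ : (End R V)ˣ) : End R V) - 1 ∈ lowering W (k + l) := by
  have hgh := mul_mem_lowering hg hh
  have hhg := mul_mem_lowering hh hg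
  rw [add_comm] at hhg
  rw [commutatorElement_sub_one]
  exact mul_mem_lowering (l := 0) (Submodule.sub_mem _ hgh hhg)
    (mul_mem_lowering (k := 0) (l := 0) hg' hh')

lemma conj_sub_one_mem_lowering {g a : (End R V)ˣ}
    (ha : (a : End R V) - 1 ∈ lowering W k) (hg : (g : End R V) ∈ lowering W 0)
    (hg' : (↑g⁻¹ : End R V) ∈ lowering W 0) :
    (↑(g * a * g⁻¹) : End R V) - 1 ∈ lowering W k := by
  rw [conj_sub_one]
  simpa using mul_mem_lowering (mul_mem_lowering hg ha) hg'

/-- There is a chain `⊥ = W 0 ≤ W 1 ≤ ⋯ ≤ W n = ⊤` of `S`-invariant subspaces such that `N` maps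
each `W (i + 1)` into `W i`. For `n = 4` and `N = A - 1` this forces `doubleCommutator A B C = 1`
for all `B`, `C` in `S`. The chain is indexed by `ℕ`, constant from `n` on, and may repeat steps. -/
def HasLoweringFlag (n : ℕ) (N : End R V) (S : Set (End R V)ˣ) : Prop :=
  ∃ W : ℕ →o Submodule R V, W 0 = ⊥ ∧ W n = ⊤ ∧ (∀ i, W (i + 1) ≤ (W i).comap N) ∧
    ∀ g ∈ S, ∀ i, W i ∈ Module.End.invtSubmodule (g : End R V)

lemma HasLoweringFlag.mono {m n : ℕ} {N : End R V} {S : Set (End R V)ˣ}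
    (h : HasLoweringFlag m N S) (hmn : m ≤ n) : HasLoweringFlag n N S := by
  obtain ⟨W, hW₀, hWm, hN, hS⟩ := h
  exact ⟨W, hW₀, top_unique (hWm ▸ W.monotone hmn), hN, hS⟩

end Lowering

section HasLoweringFlag

variable {F V : Type*} [Field F] [AddCommGroup V] [Module F V]

lemma inv_mem_lowering_zero [FiniteDimensional F V] {W : ℕ → Submodule F V}
    {g : (End F V)ˣ} (hg : (g : End F V) ∈ lowering W 0) :
    (↑g⁻¹ : End F V) ∈ lowering W 0 := by
  refine mem_lowering.2 fun i x hx => ?_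
  let e := LinearMap.GeneralLinearGroup.toLinearEquiv g
  have hmap : (W i).map (e : V →ₗ[F] V) = W i :=
    Submodule.eq_of_le_of_finrank_eq (Submodule.map_le_iff_le_comap.2 (mem_lowering.1 hg i))
      (LinearEquiv.finrank_map_eq e (W i))
  obtain ⟨y, hy, rfl⟩ := hmap.ge hx
  have : (↑g⁻¹ : End F V) (e y) = y := DFunLike.congr_fun g.inv_mul y
  simpa [this] using hy

lemma HasLoweringFlag.doubleCommutator_eq_one [FiniteDimensional F V]
    {A B C : (End F V)ˣ} (h : HasLoweringFlag 4 (A - 1 : End F V) {B, C}) :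
    doubleCommutator A B C = 1 := by
  obtain ⟨W, hW₀, hW₄, hN, hS⟩ := h
  have hA : (A - 1 : End F V) ∈ lowering W 1 := by
    refine mem_lowering.2 fun i => ?_
    cases i with
    | zero => simp [hW₀]
    | succ i => exact hN i
  have hinv {k : ℕ} {X : (End F V)ˣ} (hX : (X - 1 : End F V) ∈ lowering W k) :
      (↑X⁻¹ : End F V) ∈ lowering W 0 :=
    inv_mem_lowering_zero (by
      simpa only [sub_add_cancel] using Submodule.add_mem _
        (lowering_antitone W.monotone k.zero_le hX) one_mem_lowering_zero)
  have hcomm {g : (End F V)ˣ} (hg : g ∈ ({B, C} : Set (End F V)ˣ)) :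
      ((⁅A, g * A * g⁻¹⁆ : (End F V)ˣ) : End F V) - 1 ∈ lowering W 2 :=
    have hg₀ : (g : End F V) ∈ lowering W 0 := mem_lowering.2 (hS g hg)
    have hconj := conj_sub_one_mem_lowering hA hg₀ (inv_mem_lowering_zero hg₀)
    commutatorElement_sub_one_mem_lowering (k := 1) (l := 1) hA hconj (hinv hA) (hinv hconj)
  have hB := hcomm (Set.mem_insert B {C})
  have hC := hcomm (Set.mem_insert_of_mem B rfl)
  exact Units.ext (sub_eq_zero.1 (eq_zero_of_mem_lowering hW₀ hW₄
    (commutatorElement_sub_one_mem_lowering (k := 2) (l := 2) hB hC (hinv hB) (hinv hC))))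

end HasLoweringFlag

section Nilpotent

variable {R M : Type*} [Ring R] [AddCommGroup M] [Module R M]

lemma le_of_le_sup_map_of_isNilpotent {Z : End R M} (hZ : IsNilpotent Z)
    {p q : Submodule R M} (hp : p ∈ Module.End.invtSubmodule Z) (hq : q ≤ p ⊔ q.map Z) :
    q ≤ p := by
  have hpow (k : ℕ) : q ≤ p ⊔ q.map (Z ^ k) := by
    induction k with
    | zero => simp [Module.End.one_eq_id]
    | succ k ih =>
      calc q ≤ p ⊔ q.map Z := hq
        _ ≤ p ⊔ (p ⊔ q.map (Z ^ k)).map Z := sup_le_sup_left (Submodule.map_mono ih) p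
        _ = p ⊔ (p.map Z ⊔ q.map (Z ^ (k + 1))) := by
          rw [Submodule.map_sup, ← Submodule.map_comp, pow_succ', Module.End.mul_eq_comp]
        _ ≤ p ⊔ q.map (Z ^ (k + 1)) := by
          rw [← sup_assoc, sup_eq_left.2 ((Module.End.mem_invtSubmodule_iff_map_le _).1 hp)]
  obtain ⟨k, hk⟩ := hZ
  simpa [hk] using hpow k

end Nilpotent

section Commute

variable {R M : Type*} [CommRing R] [AddCommGroup M] [Module R M] {X Z : End R M}

lemma range_mul (f g : End R M) :
    range (f * g) = (range g).map f :=
  LinearMap.range_comp g f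

lemma ker_mem_invtSubmodule_of_commute (h : Commute X Z) :
    ker X ∈ Module.End.invtSubmodule Z := fun x hx => by
  have hx : X x = 0 := hx
  have hXZ : X (Z x) = Z (X x) := DFunLike.congr_fun h.eq x
  simp [hXZ, hx]

lemma range_mem_invtSubmodule_of_commute (h : Commute X Z) :
    range X ∈ Module.End.invtSubmodule Z := by
  rintro _ ⟨x, rfl⟩
  exact ⟨Z x, DFunLike.congr_fun h.eq x⟩

lemma ker_mem_invtSubmodule_of_semiconjBy {g : End R M} (hg : SemiconjBy g Z X)
    (h : ker X ≤ ker Z) : ker X ∈ Module.End.invtSubmodule g :=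
  fun x hx => by
    change (X * g) x = 0
    rw [← hg.eq, Module.End.mul_apply, h hx, map_zero]

end Commute

section FiniteDimensional

variable {F V : Type*} [Field F] [AddCommGroup V] [Module F V] [FiniteDimensional F V]
  {X Z P : End F V}

lemma finrank_map_add_finrank_ker_inf (f : End F V) (p : Submodule F V) :
    finrank F (p.map f) + finrank F ↥(ker f ⊓ p) = finrank F p := by
  have h := (f.domRestrict p).finrank_range_add_finrank_ker
  rw [LinearMap.range_domRestrict, LinearMap.ker_domRestrict] at h
  rw [← h, inf_comm, ← Submodule.map_comap_subtype]
  rw [(Submodule.equivMapOfInjective p.subtype p.injective_subtype _).finrank_eq]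

lemma map_le_of_isNilpotent_of_finrank_le_succ (hZ : IsNilpotent Z) {p q : Submodule F V}
    (hp : p ∈ Module.End.invtSubmodule Z) (hq : q ∈ Module.End.invtSubmodule Z) (hpq : p ≤ q)
    (hrank : finrank F q ≤ finrank F p + 1) : q.map Z ≤ p := by
  by_contra h
  have hlt : p < p ⊔ q.map Z := left_lt_sup.2 h
  have hle : p ⊔ q.map Z ≤ q := sup_le hpq ((Module.End.mem_invtSubmodule_iff_map_le _).1 hq)
  have heq : p ⊔ q.map Z = q := Submodule.eq_of_le_of_finrank_le hle
    (hrank.trans (Submodule.finrank_lt_finrank_of_lt hlt))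
  have hqp := le_of_le_sup_map_of_isNilpotent hZ hp heq.ge
  exact h ((Submodule.map_mono hqp).trans ((Module.End.mem_invtSubmodule_iff_map_le _).1 hp))

lemma finrank_map_lt_of_isNilpotent (hZ : IsNilpotent Z) {p : Submodule F V}
    (hp : p ∈ Module.End.invtSubmodule Z) (hp₀ : p ≠ ⊥) :
    finrank F (p.map Z) < finrank F p := by
  by_contra! h
  have heq := Submodule.eq_of_le_of_finrank_le ((Module.End.mem_invtSubmodule_iff_map_le _).1 hp) h
  exact hp₀ (le_bot_iff.1 (le_of_le_sup_map_of_isNilpotent hZ (Module.End.invtSubmodule.bot_mem Z)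
    (heq.ge.trans le_sup_right)))

lemma finrank_range_pow_succ_lt (hX : IsNilpotent X) {k : ℕ} (hk : X ^ k ≠ 0) :
    finrank F (range (X ^ (k + 1))) < finrank F (range (X ^ k)) := by
  rw [pow_succ', range_mul]
  exact finrank_map_lt_of_isNilpotent hX
    (range_mem_invtSubmodule_of_commute (Commute.pow_self X k)) (mt LinearMap.range_eq_bot.1 hk)

lemma mul_eq_zero_of_commute_of_finrank_range_le_one (hPZ : Commute P Z) (hZ : IsNilpotent Z)
    (hP : finrank F (range P) ≤ 1) : Z * P = 0 := by
  by_cases hP₀ : P = 0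
  · rw [hP₀, mul_zero]
  have hlt := finrank_map_lt_of_isNilpotent hZ (range_mem_invtSubmodule_of_commute hPZ)
    (mt LinearMap.range_eq_bot.1 hP₀)
  rw [← range_mul] at hlt
  exact LinearMap.range_eq_bot.1 (Submodule.finrank_eq_zero.1 (by omega))

lemma range_mem_invtSubmodule_of_semiconjBy {g : End F V} (hg : Function.Surjective g)
    (hgZX : SemiconjBy g Z X) (h : range Z ≤ range X) :
    range X ∈ Module.End.invtSubmodule g := by
  have hle : range X ≤ (range X).map g :=
    calc range X = range (X * g) := by
          rw [range_mul, LinearMap.range_eq_top.2 hg, Submodule.map_top]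
      _ = (range Z).map g := by rw [← hgZX.eq, range_mul]
      _ ≤ (range X).map g := Submodule.map_mono h
  exact (Module.End.mem_invtSubmodule_iff_map_le _).2
    (Submodule.eq_of_le_of_finrank_le hle (Submodule.finrank_map_le _ _)).ge

end FiniteDimensional

lemma isNilpotent_of_semiconjBy {M₀ : Type*} [MonoidWithZero M₀] {g : M₀ˣ} {x y : M₀}
    (h : SemiconjBy (g : M₀) x y) (hy : IsNilpotent y) : IsNilpotent x := by
  obtain ⟨k, hk⟩ := hy
  exact ⟨k, g.isUnit.mul_right_eq_zero.1 (by rw [(h.pow_right k).eq, hk, zero_mul])⟩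

section Flags

variable {F V : Type*} [Field F] [AddCommGroup V] [Module F V] [FiniteDimensional F V]
  {X Z N : End F V} {S : Set (End F V)ˣ}

omit [FiniteDimensional F V] in
lemma HasLoweringFlag.of_three_step {L H : Submodule F V} (hLH : L ≤ H)
    (hL : L ≤ ker N) (hH : H.map N ≤ L) (hN : range N ≤ H)
    (hLS : ∀ g ∈ S, L ∈ Module.End.invtSubmodule (g : End F V))
    (hHS : ∀ g ∈ S, H ∈ Module.End.invtSubmodule (g : End F V)) :
    HasLoweringFlag 3 N S := by
  let W : ℕ → Submodule F V
    | 0 => ⊥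
    | 1 => L
    | 2 => H
    | _ + 3 => ⊤
  refine ⟨⟨W, monotone_nat_of_le_succ fun i => ?_⟩, rfl, rfl, fun i => ?_, fun g hg i => ?_⟩
  · match i with
    | 0 => exact bot_le
    | 1 => exact hLH
    | _ + 2 => exact le_top
  · match i with
    | 0 => exact hL
    | 1 => exact Submodule.map_le_iff_le_comap.1 hH
    | 2 => exact Submodule.map_le_iff_le_comap.1 ((Submodule.map_top N).trans_le hN)
    | _ + 3 => exact le_top
  · match i with
    | 0 => exact Module.End.invtSubmodule.bot_mem _
    | 1 => exact hLS g hg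
    | 2 => exact hHS g hg
    | _ + 3 => exact Module.End.invtSubmodule.top_mem _

section Regular

lemma finrank_ker_pow_succ_le (X : End F V) (k : ℕ) :
    finrank F (ker (X ^ (k + 1))) ≤ finrank F (ker (X ^ k)) + finrank F (ker X) := by
  have h := finrank_map_add_finrank_ker_inf X (range (X ^ k))
  rw [← range_mul, ← pow_succ'] at h
  have hker := Submodule.finrank_mono (inf_le_left : ker X ⊓ range (X ^ k) ≤ ker X)
  have hk := (X ^ k).finrank_range_add_finrank_ker
  have hk' := (X ^ (k + 1)).finrank_range_add_finrank_ker
  omega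

lemma map_ker_pow_succ_le (hX : finrank F (ker X) ≤ 1) (hZ : IsNilpotent Z)
    (hXZ : Commute X Z) (k : ℕ) :
    (ker (X ^ (k + 1))).map Z ≤ ker (X ^ k) :=
  map_le_of_isNilpotent_of_finrank_le_succ hZ
    (ker_mem_invtSubmodule_of_commute (hXZ.pow_left k))
    (ker_mem_invtSubmodule_of_commute (hXZ.pow_left (k + 1)))
    (X.iterateKer.monotone k.le_succ)
    ((finrank_ker_pow_succ_le X k).trans (Nat.add_le_add_left hX _))

lemma ker_pow_le_ker_pow (hX : finrank F (ker X) ≤ 1) (hZ : IsNilpotent Z)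
    (hXZ : Commute X Z) (k : ℕ) : ker (X ^ k) ≤ ker (Z ^ k) := by
  induction k with
  | zero => simp
  | succ k ih =>
    intro x hx
    have hZx := ih (map_ker_pow_succ_le hX hZ hXZ k (Submodule.mem_map_of_mem hx))
    rwa [LinearMap.mem_ker, pow_succ, Module.End.mul_apply]

lemma HasLoweringFlag.of_finrank_ker_le_one (hX : IsNilpotent X)
    (hker : finrank F (ker X) ≤ 1) (hN : IsNilpotent N) (hXN : Commute X N)
    (hS : ∀ g ∈ S, ∃ Z, Commute X Z ∧ SemiconjBy (g : End F V) Z X) :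
    HasLoweringFlag (finrank F V) N S := by
  refine ⟨X.iterateKer, ?_, ?_, fun k => ?_, fun g hg k => ?_⟩
  · simp [Module.End.one_eq_id]
  · obtain ⟨k, hk⟩ := hX
    exact top_unique ((LinearMap.ker_eq_top.2 hk).ge.trans
      (Module.End.ker_pow_le_ker_pow_finrank X k))
  · exact Submodule.map_le_iff_le_comap.1 (map_ker_pow_succ_le hker hN hXN k)
  · obtain ⟨Z, hXZ, hg⟩ := hS g hg
    exact ker_mem_invtSubmodule_of_semiconjBy (hg.pow_right k)
      (ker_pow_le_ker_pow hker (isNilpotent_of_semiconjBy hg hX) hXZ k)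

end Regular

section CubeZero

lemma ker_sq_eq_ker_sup_range (hX : X ^ 3 = 0)
    (hrank : finrank F (range X) =
      2 * finrank F (range (X ^ 2))) :
    ker (X ^ 2) = ker X ⊔ range X := by
  have hle : ker X ⊔ range X ≤ ker (X ^ 2) :=
    sup_le (by simpa using X.iterateKer.monotone one_le_two)
      (LinearMap.range_le_ker_iff.2 (by rw [← Module.End.mul_eq_comp, ← pow_succ, hX]))
  refine (Submodule.eq_of_le_of_finrank_eq hle ?_).symm
  have hsup := Submodule.finrank_sup_add_finrank_inf_eq (ker X) (range X)
  have hmap := finrank_map_add_finrank_ker_inf X (range X)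
  rw [← range_mul, ← sq] at hmap
  have h₁ := X.finrank_range_add_finrank_ker
  have h₂ := (X ^ 2).finrank_range_add_finrank_ker
  omega

lemma range_le_ker_sq_of_commute (hZ : IsNilpotent Z) (hXZ : Commute X Z)
    (hrank : finrank F (range (X ^ 2)) ≤ 1) : range Z ≤ ker (X ^ 2) := by
  rw [LinearMap.range_le_ker_iff, ← Module.End.mul_eq_comp, (hXZ.pow_left 2).eq]
  exact mul_eq_zero_of_commute_of_finrank_range_le_one (hXZ.pow_left 2) hZ hrank

lemma range_sq_le_ker_of_commute (hZ : IsNilpotent Z) (hXZ : Commute X Z)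
    (hrank : finrank F (range (X ^ 2)) ≤ 1) :
    range (X ^ 2) ≤ ker Z :=
  LinearMap.range_le_ker_iff.2
    (mul_eq_zero_of_commute_of_finrank_range_le_one (hXZ.pow_left 2) hZ hrank)

variable (hX : X ^ 3 = 0) (hrank : finrank F (range X) = 2)
  (hrank_sq : finrank F (range (X ^ 2)) = 1)
  (hker : finrank F (ker X) = 2)
include hX hrank hrank_sq hker

lemma map_ker_sq_le_range_sq (hZ : IsNilpotent Z) (hXZ : Commute X Z) :
    (ker (X ^ 2)).map Z ≤ range (X ^ 2) := by
  have hsup := ker_sq_eq_ker_sup_range hX (by rw [hrank, hrank_sq])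
  have hle : range (X ^ 2) ≤ ker X :=
    LinearMap.range_le_ker_iff.2 (by rw [← Module.End.mul_eq_comp, ← pow_succ', hX])
  have hkerX : (ker X).map Z ≤ range (X ^ 2) :=
    map_le_of_isNilpotent_of_finrank_le_succ hZ
      (range_mem_invtSubmodule_of_commute (hXZ.pow_left 2)) (ker_mem_invtSubmodule_of_commute hXZ)
      hle (by rw [hker, hrank_sq])
  have hrangeX : (range X).map Z ≤ range (X ^ 2) :=
    calc (range X).map Z = (range Z).map X := by
          rw [← range_mul, ← range_mul, hXZ.eq]
      _ ≤ (ker X ⊔ range X).map X :=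
        Submodule.map_mono (hsup ▸ range_le_ker_sq_of_commute hZ hXZ hrank_sq.le)
      _ = range (X ^ 2) := by
        rw [Submodule.map_sup, LinearMap.le_ker_iff_map.1 le_rfl, bot_sup_eq, sq, range_mul]
  rw [hsup, Submodule.map_sup]
  exact sup_le hkerX hrangeX

lemma HasLoweringFlag.of_cube_eq_zero (hN : IsNilpotent N) (hXN : Commute X N)
    (hS : ∀ g ∈ S, ∃ Z, Commute X Z ∧ SemiconjBy (g : End F V) Z X) :
    HasLoweringFlag 3 N S := by
  have hnil : IsNilpotent X := ⟨3, hX⟩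
  have hmap {Z : End F V} (hZ : IsNilpotent Z) (hXZ : Commute X Z) :=
    map_ker_sq_le_range_sq hX hrank hrank_sq hker hZ hXZ
  refine .of_three_step (L := range (X ^ 2)) (H := ker (X ^ 2))
    (range_le_ker_sq_of_commute (hnil.pow_of_pos two_ne_zero) (Commute.self_pow X 2) hrank_sq.le)
    (range_sq_le_ker_of_commute hN hXN hrank_sq.le) (hmap hN hXN)
    (range_le_ker_sq_of_commute hN hXN hrank_sq.le) (fun g hg => ?_) (fun g hg => ?_)
  · obtain ⟨Z, hXZ, hgZX⟩ := hS g hg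
    have hZ := isNilpotent_of_semiconjBy hgZX hnil
    refine range_mem_invtSubmodule_of_semiconjBy ((Module.End.isUnit_iff _).1 g.isUnit).surjective
      (hgZX.pow_right 2) ?_
    rw [sq, range_mul]
    exact (Submodule.map_mono (range_le_ker_sq_of_commute hZ hXZ hrank_sq.le)).trans (hmap hZ hXZ)
  · obtain ⟨Z, hXZ, hgZX⟩ := hS g hg
    have hZ := isNilpotent_of_semiconjBy hgZX hnil
    refine ker_mem_invtSubmodule_of_semiconjBy (hgZX.pow_right 2) fun x hx => ?_
    rw [LinearMap.mem_ker, sq, Module.End.mul_apply]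
    exact range_sq_le_ker_of_commute hZ hXZ hrank_sq.le
      (hmap hZ hXZ (Submodule.mem_map_of_mem hx))

end CubeZero

end Flags

section SquareZero

lemma mul_eq_zero_of_sq_eq_zero {R : Type*} [CommRing R] (h2 : IsUnit (2 : R)) {p q r : R}
    (hp : p ^ 2 = 0) (hq : q ^ 2 = 0) (hr : r ^ 2 = 0) (h : (1 + p) * (1 + r) = (1 + q) ^ 2) :
    p * q = 0 := by
  have hpqr : p * q * r = 0 :=
    h2.mul_right_eq_zero.1 (by
      linear_combination (r + r ^ 2) * hp + p * hr - p * r * hq - p * r * h)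
  have hpr : p * r = 2 * (p * q) := by linear_combination p * h - (1 + r) * hp + p * hq
  have hpr' : p * r = 2 * (q * r) := by linear_combination r * h - (1 + p) * hr + r * hq
  have hpr₀ : 2 * (p * r) = 0 := by
    linear_combination hpr + hpr' + 2 * q * h + (4 + 2 * q) * hq - 2 * hpqr
  exact h2.mul_right_eq_zero.1 (hpr.symm.trans (h2.mul_right_eq_zero.1 hpr₀))

lemma sub_one_mul_sub_one_eq_zero {R : Type*} [CommRing R] (h2 : IsUnit (2 : R)) {a t : R}
    (ht : (t - 1) ^ 2 = 0) (hat : (a * t - 1) ^ 2 = 0) (haat : (a ^ 2 * t - 1) ^ 2 = 0) :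
    (a - 1) * (t - 1) = 0 ∧ (a - 1) ^ 2 = 0 := by
  have hmul : (t - 1) * (a * t - 1) = 0 :=
    mul_eq_zero_of_sq_eq_zero h2 ht hat haat (by ring)
  have ha : a - 1 = (a * t - 1) - (t - 1) := by linear_combination a * ht - hmul
  constructor
  · linear_combination (t - 1) * ha + hmul - ht
  · linear_combination (a - 1 + (a * t - 1) - (t - 1)) * ha + hat + ht - 2 * hmul

open scoped IsMulCommutative in
lemma sub_one_mul_sub_one_eq_zero_of_commute {F E : Type*} [CommRing F] [Ring E] [Algebra F E]
    (h2 : IsUnit (2 : F)) {a t : E} (hat : Commute a t) (ht : (t - 1) ^ 2 = 0)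
    (hat' : (a * t - 1) ^ 2 = 0) (haat : (a ^ 2 * t - 1) ^ 2 = 0) :
    (a - 1) * (t - 1) = 0 ∧ (a - 1) ^ 2 = 0 := by
  let R := Algebra.adjoin F {a, t}
  have : IsMulCommutative R := Algebra.isMulCommutative_adjoin F (by
    rintro x (rfl | rfl) y (rfl | rfl)
    exacts [rfl, hat.eq, hat.eq.symm, rfl])
  let a' : R := ⟨a, Algebra.subset_adjoin (Set.mem_insert a {t})⟩
  let t' : R := ⟨t, Algebra.subset_adjoin (Set.mem_insert_of_mem a rfl)⟩
  have h2' : IsUnit (2 : R) := by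
    simpa only [map_ofNat] using h2.map (algebraMap F R)
  have h := sub_one_mul_sub_one_eq_zero h2' (a := a') (t := t') (Subtype.ext ht)
    (Subtype.ext hat') (Subtype.ext haat)
  exact ⟨congrArg Subtype.val h.1, congrArg Subtype.val h.2⟩

variable {F V : Type*} [Field F] [AddCommGroup V] [Module F V] [FiniteDimensional F V]
  {X N : End F V} {S : Set (End F V)ˣ}

omit [FiniteDimensional F V] in
lemma finrank_range_eq_of_semiconjBy {g : (End F V)ˣ} {Y Z : End F V}
    (h : SemiconjBy (g : End F V) Y Z) :
    finrank F (range Y) = finrank F (range Z) := by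
  let e := LinearMap.GeneralLinearGroup.toLinearEquiv g
  rw [← LinearEquiv.finrank_map_eq e]
  change finrank F ((range Y).map (g : End F V)) = _
  rw [← range_mul, h.eq, range_mul,
    LinearMap.range_eq_top.2 ((Module.End.isUnit_iff _).1 g.isUnit).surjective, Submodule.map_top]

lemma HasLoweringFlag.of_mul_eq_zero (hXN : X * N = 0) (hNX : N * X = 0)
    (h : ker X ≤ ker N ∨ range N ≤ range X)
    (hS : ∀ g ∈ S, ∃ c : F, SemiconjBy (g : End F V) (X + c • N) X) :
    HasLoweringFlag 3 N S := by
  rcases h with hker | hrange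
  · have hS' (g) (hg : g ∈ S) :
        ker X ∈ Module.End.invtSubmodule (g : End F V) := by
      obtain ⟨c, hgX⟩ := hS g hg
      refine ker_mem_invtSubmodule_of_semiconjBy hgX fun x hx => ?_
      have hXx : X x = 0 := hx
      have hNx : N x = 0 := hker hx
      simp [hXx, hNx]
    refine .of_three_step le_rfl hker ?_ (LinearMap.range_le_ker_iff.2 hXN) hS' hS'
    rw [LinearMap.le_ker_iff_map.1 hker]
    exact bot_le
  · have hS' (g) (hg : g ∈ S) :
        range X ∈ Module.End.invtSubmodule (g : End F V) := by
      obtain ⟨c, hgX⟩ := hS g hg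
      refine range_mem_invtSubmodule_of_semiconjBy
        ((Module.End.isUnit_iff _).1 g.isUnit).surjective hgX ?_
      rintro _ ⟨x, rfl⟩
      exact add_mem (LinearMap.mem_range_self X x)
        (Submodule.smul_mem _ c (hrange (LinearMap.mem_range_self N x)))
    have hker := LinearMap.range_le_ker_iff.2 hNX
    refine .of_three_step le_rfl hker ?_ hrange hS' hS'
    rw [LinearMap.le_ker_iff_map.1 hker]
    exact bot_le

lemma range_le_span_singleton_of_finrank_le_one {Y : End F V} {w : V}
    (hY : finrank F (range Y) ≤ 1) (hw : w ∈ range Y) (hw₀ : w ≠ 0) :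
    range Y ≤ Submodule.span F {w} :=
  (Submodule.eq_of_le_of_finrank_le ((Submodule.span_singleton_le_iff_mem w _).2 hw)
    (by rwa [finrank_span_singleton hw₀])).ge

lemma ker_le_ker_or_range_le_range_of_finrank_range_le_one (h2 : (2 : F) ≠ 0)
    (hX : finrank F (range X) ≤ 1)
    (h₁ : finrank F (range (X + N)) = finrank F (range X))
    (h₂ : finrank F (range (X + (2 : F) • N)) = finrank F (range X)) :
    ker X ≤ ker N ∨ range N ≤ range X := by
  refine or_iff_not_imp_left.2 fun hker => ?_
  obtain ⟨v, hXv, hNv⟩ := SetLike.not_le_iff_exists.1 hker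
  have hXv : X v = 0 := hXv
  have hNv : N v ≠ 0 := hNv
  set L := Submodule.span F {N v}
  have hP : range (X + N) ≤ L :=
    range_le_span_singleton_of_finrank_le_one (h₁.trans_le hX) ⟨v, by simp [hXv]⟩ hNv
  have hQ : range (X + (2 : F) • N) ≤ L :=
    range_le_span_singleton_of_finrank_le_one (h₂.trans_le hX)
      ⟨(2 : F)⁻¹ • v, by simp [hXv, smul_smul, h2]⟩ hNv
  have hXL : range X ≤ L := by
    rintro _ ⟨x, rfl⟩
    have := sub_mem (Submodule.smul_mem L (2 : F) (hP ⟨x, rfl⟩)) (hQ ⟨x, rfl⟩)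
    convert this using 1
    simp only [LinearMap.add_apply, LinearMap.smul_apply]
    module
  have hNL : range N ≤ L := by
    rintro _ ⟨x, rfl⟩
    have := sub_mem (hQ ⟨x, rfl⟩) (hP ⟨x, rfl⟩)
    convert this using 1
    simp only [LinearMap.add_apply, LinearMap.smul_apply]
    module
  have hLP : L ≤ range (X + N) :=
    (Submodule.span_singleton_le_iff_mem _ _).2 ⟨v, by simp [hXv]⟩
  exact hNL.trans (Submodule.eq_of_le_of_finrank_le hXL
    ((Submodule.finrank_mono hLP).trans_eq h₁)).ge

lemma ker_le_ker_or_range_le_range (h2 : (2 : F) ≠ 0) (hV : finrank F V ≤ 4)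
    (hX : X * X = 0) (hXN : X * N = 0)
    (h₁ : finrank F (range (X + N)) = finrank F (range X))
    (h₂ : finrank F (range (X + (2 : F) • N)) = finrank F (range X)) :
    ker X ≤ ker N ∨ range N ≤ range X := by
  rcases Nat.lt_or_ge 1 (finrank F (range X)) with hlt | hle
  · have hrank := X.finrank_range_add_finrank_ker
    have heq := Submodule.eq_of_le_of_finrank_le (LinearMap.range_le_ker_iff.2 hX) (by omega)
    exact .inr (heq ▸ LinearMap.range_le_ker_iff.2 hXN)
  · exact ker_le_ker_or_range_le_range_of_finrank_range_le_one h2 hle h₁ h₂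

end SquareZero

section Unipotent

section Ring

variable {R : Type*} [Ring R] {a t : R}

lemma mul_sub_one_eq_add (h : (a - 1) * (t - 1) = 0) : a * t - 1 = t - 1 + (a - 1) := by
  have : a * t - 1 = (a - 1) * (t - 1) + (t - 1 + (a - 1)) := by noncomm_ring
  rw [this, h, zero_add]

lemma sq_mul_sub_one_eq_add (h : (a - 1) * (t - 1) = 0) (ha : (a - 1) ^ 2 = 0) :
    a ^ 2 * t - 1 = t - 1 + 2 * (a - 1) := by
  have : a ^ 2 * t - 1 =
      (a + 1) * ((a - 1) * (t - 1)) + (a - 1) ^ 2 + (t - 1 + 2 * (a - 1)) := by noncomm_ring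
  rw [this, h, ha, mul_zero, zero_add, zero_add]

lemma semiconjBy_sub_one {g x y : R} (h : SemiconjBy g x y) : SemiconjBy g (x - 1) (y - 1) :=
  h.sub_right (SemiconjBy.one_right g)

end Ring

variable {F V : Type*} [Field F] [AddCommGroup V] [Module F V] [FiniteDimensional F V]
  {A T : End F V} {B C : (End F V)ˣ}

lemma HasLoweringFlag.of_sub_one_sq_eq_zero (h2 : (2 : F) ≠ 0) (hV : finrank F V ≤ 4)
    (hAT : Commute A T) (hT : (T - 1) ^ 2 = 0)
    (hB : SemiconjBy (B : End F V) (A * T) T)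
    (hC : SemiconjBy (C : End F V) (A ^ 2 * T) T) :
    HasLoweringFlag 3 (A - 1) {B, C} := by
  have hsq {g : (End F V)ˣ} {Y : End F V}
      (h : SemiconjBy (g : End F V) Y T) : (Y - 1) ^ 2 = 0 :=
    g.isUnit.mul_right_eq_zero.1 (by
      rw [((semiconjBy_sub_one h).pow_right 2).eq, hT, zero_mul])
  obtain ⟨hNX, hN⟩ :=
    sub_one_mul_sub_one_eq_zero_of_commute h2.isUnit hAT hT (hsq hB) (hsq hC)
  have hXN : (T - 1) * (A - 1) = 0 :=
    ((hAT.sub_left (Commute.one_left T)).sub_right (Commute.one_right _)).eq.symm.trans hNX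
  have hB' : SemiconjBy (B : End F V) (T - 1 + (A - 1)) (T - 1) :=
    mul_sub_one_eq_add hNX ▸ semiconjBy_sub_one hB
  have hC' : SemiconjBy (C : End F V) (T - 1 + (2 : F) • (A - 1)) (T - 1) := by
    rw [ofNat_smul_eq_nsmul, nsmul_eq_mul, Nat.cast_ofNat, ← sq_mul_sub_one_eq_add hNX hN]
    exact semiconjBy_sub_one hC
  refine .of_mul_eq_zero hXN hNX (ker_le_ker_or_range_le_range h2 hV (sq (T - 1) ▸ hT) hXN
    (finrank_range_eq_of_semiconjBy hB') (finrank_range_eq_of_semiconjBy hC')) ?_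
  rintro g (rfl | rfl)
  exacts [⟨1, by rwa [one_smul]⟩, ⟨2, hC'⟩]

lemma HasLoweringFlag.of_isNilpotent_sub_one (h2 : (2 : F) ≠ 0) (hV : finrank F V ≤ 4)
    (hAT : Commute A T) (hA : IsNilpotent (A - 1)) (hT : IsNilpotent (T - 1))
    (hB : SemiconjBy (B : End F V) (A * T) T)
    (hC : SemiconjBy (C : End F V) (A ^ 2 * T) T) :
    HasLoweringFlag 4 (A - 1) {B, C} := by
  have hXN : Commute (T - 1) (A - 1) :=
    (hAT.symm.sub_left (Commute.one_left A)).sub_right (Commute.one_right _)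
  have hS : ∀ g ∈ ({B, C} : Set (End F V)ˣ),
      ∃ Z, Commute (T - 1) Z ∧ SemiconjBy (g : End F V) Z (T - 1) := by
    have hTZ {a : End F V} (h : Commute a T) : Commute (T - 1) (a * T - 1) :=
      ((h.symm.mul_right (Commute.refl T)).sub_left (Commute.one_left _)).sub_right
        (Commute.one_right _)
    rintro g (rfl | rfl)
    exacts [⟨_, hTZ hAT, semiconjBy_sub_one hB⟩, ⟨_, hTZ (hAT.pow_left 2), semiconjBy_sub_one hC⟩]
  by_cases hsq : (T - 1) ^ 2 = 0
  · exact (of_sub_one_sq_eq_zero h2 hV hAT hsq hB hC).mono (Nat.le_succ 3)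
  by_cases hker : finrank F (ker (T - 1)) ≤ 1
  · exact (of_finrank_ker_le_one hT hker hA hXN hS).mono hV
  · have hadd := (T - 1).finrank_range_add_finrank_ker
    have hX : (T - 1) ^ 1 ≠ 0 := fun h => hsq (by rw [pow_succ, h, zero_mul])
    have h₁ := finrank_range_pow_succ_lt hT hX
    have h₂ := finrank_range_pow_succ_lt hT hsq
    rw [pow_one] at h₁
    simp only [Nat.reduceAdd] at h₁ h₂
    have hcube : (T - 1) ^ 3 = 0 :=
      LinearMap.range_eq_bot.1 (Submodule.finrank_eq_zero.1 (by omega))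
    exact (of_cube_eq_zero hcube (by omega) (by omega) (by omega) hA hXN hS).mono (Nat.le_succ 3)

end Unipotent

section UnipotentPart

variable {K V : Type*} [Field K] [PerfectField K] [AddCommGroup V] [Module K V]
  [FiniteDimensional K V]

lemma semiconjBy_isSemisimple {g : (End K V)ˣ} {n s n' s' : End K V}
    (hn : IsNilpotent n) (hs : s.IsSemisimple) (hns : Commute n s)
    (hn' : IsNilpotent n') (hs' : s'.IsSemisimple) (hns' : Commute n' s')
    (h : SemiconjBy (g : End K V) (n' + s') (n + s)) :
    SemiconjBy (g : End K V) s' s := by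
  let e := LinearMap.GeneralLinearGroup.toLinearEquiv g
  let φ := e.symm.conjAlgEquiv K
  have hφ (x : End K V) : φ x = ↑g⁻¹ * x * g := rfl
  have hφs : (φ s).IsSemisimple :=
    (LinearEquiv.isSemisimple_iff (φ s) s e (by ext x; simp [φ])).2 hs
  have hsum : n' + s' = φ n + φ s := by
    rw [← map_add, hφ, mul_assoc, ← h.eq, Units.inv_mul_cancel_left]
  have := (Module.End.isNilpotent_isSemisimple_unique hn' hs' (hn.map φ) hφs hns'
    (hns.map φ) hsum).2
  rw [this, hφ, SemiconjBy, mul_assoc, Units.mul_inv_cancel_left]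

lemma exists_unipotent_part (T : (End K V)ˣ) :
    ∃ U : End K V, IsNilpotent (U - 1) ∧ (∀ A, Commute A ↑T → Commute A U) ∧
      ∀ (A : End K V) (g : (End K V)ˣ), Commute A ↑T → IsNilpotent (A - 1) →
        SemiconjBy (g : End K V) (A * T) T → SemiconjBy (g : End K V) (A * U) U := by
  obtain ⟨n, hnT, s, hsT, hn, hs, hT⟩ := (T : End K V).exists_isNilpotent_isSemisimple
  have hcn {A : End K V} (hA : Commute A ↑T) : Commute A n :=
    Algebra.commute_of_mem_adjoin_singleton_of_commute hnT hA
  have hcs {A : End K V} (hA : Commute A ↑T) : Commute A s :=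
    Algebra.commute_of_mem_adjoin_singleton_of_commute hsT hA
  have hns : Commute n s := hcs (hcn (Commute.refl _)).symm
  obtain ⟨s, rfl⟩ : IsUnit s := by
    rw [eq_sub_of_add_eq' hT.symm, sub_eq_add_neg]
    exact hn.neg.isUnit_add_left_of_commute T.isUnit (hcn (Commute.refl _)).symm.neg_left
  refine ⟨↑s⁻¹ * T, ?_, fun A hA => (hcs hA).units_inv_right.mul_right hA, fun A g hA hA₁ h => ?_⟩
  · rw [hT, mul_add, Units.inv_mul, add_sub_cancel_right]
    exact hns.symm.units_inv_left.isNilpotent_mul_left hn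
  · have hsum : A * T = (A - 1) * T + n + s := by
      rw [add_assoc, ← hT, sub_mul, one_mul, sub_add_cancel]
    have hA₁T : Commute (A - 1) (T : End K V) := hA.sub_left (Commute.one_left _)
    have hnil : IsNilpotent ((A - 1) * T + n) := by
      refine Commute.isNilpotent_add ?_ (hA₁T.isNilpotent_mul_right hA₁) hn
      exact (hcn hA₁T).mul_left (hcn (Commute.refl _))
    have hcomm : Commute ((A - 1) * T + n) (s : End K V) :=
      ((hcs hA₁T).mul_left (hcs (Commute.refl _))).add_left hns
    have hgs : SemiconjBy (g : End K V) s s :=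
      semiconjBy_isSemisimple hn hs hns hnil hs hcomm (by rwa [← hsum, ← hT])
    rw [← mul_assoc, (hcs hA).units_inv_right.eq, mul_assoc]
    exact hgs.units_inv_right.mul_right h

end UnipotentPart

section Characters

lemma isOfFinAddOrder_of_forall_rat {G : Type*} [AddCommGroup G] {g : G}
    (h : ∀ φ : G →+ ℚ, φ g = 0) : IsOfFinAddOrder g := by
  by_contra hg
  obtain ⟨φ, hφ⟩ := (Module.Baer.of_divisible ℚ).extension_property_addMonoidHom
    (zmultiplesHom G g) (injective_zsmul_iff_not_isOfFinAddOrder.2 hg) (Int.castAddHom ℚ)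
  have hφg : φ g = 1 := by simpa using DFunLike.congr_fun hφ 1
  exact one_ne_zero (hφg.symm.trans (h φ))

lemma isOfFinOrder_of_map_mul_snd_eq {G : Type*} [CommGroup G] {s : Multiset (G × G)}
    (h₁ : s.map (fun p => p.1 * p.2) = s.map Prod.snd)
    (h₂ : s.map (fun p => p.1 ^ 2 * p.2) = s.map Prod.snd) {p : G × G} (hp : p ∈ s) :
    IsOfFinOrder p.1 := by
  refine isOfFinAddOrder_ofMul_iff.1 (isOfFinAddOrder_of_forall_rat fun φ => ?_)
  let f (x : G) : ℚ := φ (.ofMul x) ^ 2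
  have hsum₁ := congrArg (fun t => (t.map f).sum) h₁
  have hsum₂ := congrArg (fun t => (t.map f).sum) h₂
  simp only [Multiset.map_map, Function.comp_def] at hsum₁ hsum₂
  have hdiff (q : G × G) :
      2 * f q.1 = f (q.1 ^ 2 * q.2) - 2 * f (q.1 * q.2) + f q.2 := by
    simp only [f, ofMul_mul, ofMul_pow, map_add, map_nsmul, nsmul_eq_mul, Nat.cast_ofNat]
    ring
  have hzero : (s.map fun q => 2 * f q.1).sum = 0 := by
    simp only [hdiff, Multiset.sum_map_add, Multiset.sum_map_sub, Multiset.sum_map_mul_left,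
      hsum₁, hsum₂]
    ring
  have hp₀ := Multiset.all_zero_of_le_zero_le_of_sum_eq_zero
    (Multiset.forall_mem_map_iff.2 fun q _ => mul_nonneg zero_le_two (sq_nonneg _)) hzero _
    (Multiset.mem_map_of_mem _ hp)
  simpa [f] using hp₀

end Characters

section JointEigenvalues

variable {F V : Type*} [Field F] [AddCommGroup V] [Module F V]

lemma maxGenEigenspace_inf_le_mul {A T : End F V} (h : Commute A T) (a t : F) :
    A.maxGenEigenspace a ⊓ T.maxGenEigenspace t ≤ (A * T).maxGenEigenspace (a * t) := by
  intro v ⟨hvA, hvT⟩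
  have hAT : Commute (A - a • 1) T := h.sub_left ((Commute.one_left T).smul_left a)
  have hv₁ : v ∈ ((A - a • 1) * T).maxGenEigenspace 0 := by
    obtain ⟨k, hk⟩ := (A.mem_maxGenEigenspace a v).1 hvA
    refine (Module.End.mem_maxGenEigenspace _ _ _).2 ⟨k, ?_⟩
    rw [zero_smul, sub_zero, hAT.mul_pow, (hAT.pow_pow k k).eq, Module.End.mul_apply, hk, map_zero]
  have hv₂ : v ∈ (a • T).maxGenEigenspace (a * t) :=
    Module.End.genEigenspace_le_smul T t a ⊤ hvT
  have hcomm : Commute ((A - a • 1) * T) (a • T) := (hAT.mul_left (Commute.refl T)).smul_right a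
  have hv := Module.End.genEigenspace_inf_le_add _ _ 0 (a * t) ⊤ ⊤ hcomm ⟨hv₁, hv₂⟩
  rwa [zero_add, top_add, sub_mul, smul_mul_assoc, one_mul, sub_add_cancel] at hv

lemma maxGenEigenspace_le_pow (A : End F V) (a : F) (m : ℕ) :
    A.maxGenEigenspace a ≤ (A ^ m).maxGenEigenspace (a ^ m) := by
  induction m with
  | zero => exact fun v _ => (Module.End.mem_maxGenEigenspace _ _ _).2 ⟨1, by simp⟩
  | succ m ih =>
    rw [pow_succ, pow_succ]
    exact (le_inf ih le_rfl).trans (maxGenEigenspace_inf_le_mul (Commute.pow_self A m) _ _)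

variable [FiniteDimensional F V] {ι : Type*} {W : ι → Submodule F V}

lemma finrank_finset_sup (hW : iSupIndep W) (s : Finset ι) :
    finrank F ↥(s.sup W) = ∑ i ∈ s, finrank F (W i) := by
  classical
  induction s using Finset.induction_on with
  | empty => simp
  | insert a s ha ih =>
    have hdisj : Disjoint (W a) (s.sup W) :=
      (hW a).mono_right <| Finset.sup_le fun i hi =>
        le_iSup₂_of_le i (ne_of_mem_of_not_mem hi ha) le_rfl
    have := Submodule.finrank_sup_add_finrank_inf_eq (W a) (s.sup W)
    rw [hdisj.eq_bot, finrank_bot] at this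
    rw [Finset.sup_insert, Finset.sum_insert ha, ← ih]
    omega

lemma charpoly_roots_eq_sum_replicate [Fintype ι] (hW : iSupIndep W) (htop : ⨆ i, W i = ⊤)
    {f : End F V} {c : ι → F} (hc : ∀ i, W i ≤ f.maxGenEigenspace (c i)) :
    f.charpoly.roots = ∑ i, Multiset.replicate (finrank F (W i)) (c i) := by
  classical
  refine (Multiset.eq_of_le_of_card_le (Multiset.le_iff_count.2 fun μ => ?_) ?_).symm
  · rw [Polynomial.count_roots, ← LinearMap.finrank_maxGenEigenspace_eq, Multiset.count_sum']
    simp only [Multiset.count_replicate]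
    rw [← Finset.sum_filter, ← finrank_finset_sup hW]
    refine Submodule.finrank_mono (Finset.sup_le fun i hi => ?_)
    exact (Finset.mem_filter.1 hi).2 ▸ hc i
  · rw [Multiset.card_sum]
    simp only [Multiset.card_replicate]
    rw [← finrank_finset_sup hW, Finset.sup_univ_eq_iSup, htop, finrank_top,
      ← f.charpoly_natDegree]
    exact Polynomial.card_roots' _

lemma commute_cond {M : Type*} [Mul M] {x y : M} (h : Commute x y) (i j : Bool) :
    Commute (cond i x y) (cond j x y) := by
  cases i <;> cases j
  exacts [Commute.refl y, h.symm, h, Commute.refl x]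

omit [FiniteDimensional F V] in
lemma iSupIndep_maxGenEigenspace_inf {A T : End F V} (h : Commute A T) :
    iSupIndep fun p : F × F => A.maxGenEigenspace p.1 ⊓ T.maxGenEigenspace p.2 := by
  have hind := Module.End.independent_iInf_maxGenEigenspace_of_forall_mapsTo (cond · T A)
    fun i j => Module.End.mapsTo_maxGenEigenspace_of_comm (commute_cond h.symm j i)
  simpa [Function.comp_def, iInf_bool_eq, inf_comm] using
    hind.comp (Equiv.boolArrowEquivProd F).symm.injective

lemma iSup_maxGenEigenspace_inf_eq_top [IsAlgClosed F] {A T : End F V}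
    (h : Commute A T) :
    ⨆ p : F × F, A.maxGenEigenspace p.1 ⊓ T.maxGenEigenspace p.2 = ⊤ := by
  have htop :=
    Module.End.iSup_iInf_maxGenEigenspace_eq_top_of_iSup_maxGenEigenspace_eq_top_of_commute
      (cond · T A) (fun i j _ => commute_cond h.symm i j)
        fun i => Module.End.iSup_maxGenEigenspace_eq_top _
  rw [← htop, ← (Equiv.boolArrowEquivProd F).symm.iSup_comp]
  simp [iInf_bool_eq, inf_comm]

lemma exists_charpoly_roots_pow_mul_pow_eq_map [IsAlgClosed F] {A T : End F V}
    (h : Commute A T) : ∃ s : Multiset (F × F), ∀ m n : ℕ,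
      (A ^ m * T ^ n).charpoly.roots = s.map fun p => p.1 ^ m * p.2 ^ n := by
  let W (p : F × F) : Submodule F V := A.maxGenEigenspace p.1 ⊓ T.maxGenEigenspace p.2
  have hind : iSupIndep W := iSupIndep_maxGenEigenspace_inf h
  have htop : ⨆ p : {p // W p ≠ ⊥}, W p = ⊤ :=
    (iSup_ne_bot_subtype W).trans (iSup_maxGenEigenspace_inf_eq_top h)
  let _ := hind.fintypeNeBotOfFiniteDimensional
  refine ⟨∑ p : {p // W p ≠ ⊥}, .replicate (finrank F (W p)) p.1, fun m n => ?_⟩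
  have hW (p : {p // W p ≠ ⊥}) : W p ≤ (A ^ m * T ^ n).maxGenEigenspace (p.1.1 ^ m * p.1.2 ^ n) :=
    (inf_le_inf (maxGenEigenspace_le_pow A _ m) (maxGenEigenspace_le_pow T _ n)).trans
      (maxGenEigenspace_inf_le_mul (h.pow_pow m n) _ _)
  rw [charpoly_roots_eq_sum_replicate (hind.comp Subtype.val_injective) htop hW,
    ← Multiset.coe_mapAddMonoidHom, map_sum]
  simp only [Multiset.coe_mapAddMonoidHom, Multiset.map_replicate, Function.comp_apply]

lemma zero_notMem_charpoly_roots (A : (End F V)ˣ) :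
    0 ∉ (A : End F V).charpoly.roots := fun h =>
  spectrum.zero_notMem F A.isUnit (Module.End.hasEigenvalue_iff_mem_spectrum.1
    ((Module.End.hasEigenvalue_iff_isRoot_charpoly _ _).2 (Polynomial.isRoot_of_mem_roots h)))

lemma exists_units_charpoly_roots_pow_mul_pow_eq_map [IsAlgClosed F] {A T : (End F V)ˣ}
    (h : Commute A T) : ∃ s : Multiset (Fˣ × Fˣ), ∀ m n : ℕ,
      ((A : End F V) ^ m * (T : End F V) ^ n).charpoly.roots =
        (s.map fun p => p.1 ^ m * p.2 ^ n).map Units.val := by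
  obtain ⟨s, hs⟩ := exists_charpoly_roots_pow_mul_pow_eq_map h.units_val
  have hA : (A : End F V).charpoly.roots = s.map Prod.fst := by simpa using hs 1 0
  have hT : (T : End F V).charpoly.roots = s.map Prod.snd := by simpa using hs 0 1
  have hunit (p) (hp : p ∈ s) : IsUnit p.1 ∧ IsUnit p.2 := by
    refine ⟨.mk0 _ fun h₀ => ?_, .mk0 _ fun h₀ => ?_⟩
    · exact zero_notMem_charpoly_roots A (hA ▸ h₀ ▸ Multiset.mem_map_of_mem _ hp)
    · exact zero_notMem_charpoly_roots T (hT ▸ h₀ ▸ Multiset.mem_map_of_mem _ hp)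
  lift s to Multiset (Fˣ × Fˣ) using hunit
  refine ⟨s, fun m n => ?_⟩
  rw [hs, Multiset.map_map, Multiset.map_map]
  simp

lemma isNilpotent_sub_one_of_charpoly_roots [IsAlgClosed F] {f : End F V}
    (h : ∀ μ ∈ f.charpoly.roots, μ = 1) : IsNilpotent (f - 1) := by
  have hroots := Multiset.eq_replicate_card.2 h
  have hf := (IsAlgClosed.splits f.charpoly).eq_prod_roots_of_monic f.charpoly_monic
  rw [hroots, Multiset.map_replicate, Multiset.prod_replicate] at hf
  obtain ⟨k, hk⟩ : ∃ k, f.charpoly = (Polynomial.X - Polynomial.C 1) ^ k := ⟨_, hf⟩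
  exact ⟨k, by simpa [hk] using f.aeval_self_charpoly⟩

lemma charpoly_eq_of_semiconjBy {g : (End F V)ˣ} {Y Z : End F V}
    (h : SemiconjBy (g : End F V) Y Z) : Y.charpoly = Z.charpoly := by
  rw [← LinearEquiv.charpoly_conj (LinearMap.GeneralLinearGroup.toLinearEquiv g) Y]
  congr 1
  change g * Y * ↑g⁻¹ = Z
  rw [h.eq, Units.mul_inv_cancel_right]

lemma exists_isNilpotent_pow_sub_one [IsAlgClosed F] {A T B C : (End F V)ˣ}
    (hAT : Commute A T) (hB : SemiconjBy B (A * T) T) (hC : SemiconjBy C (A ^ 2 * T) T) :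
    ∃ N ≠ 0, IsNilpotent ((A : End F V) ^ N - 1) := by
  obtain ⟨s, hs⟩ := exists_units_charpoly_roots_pow_mul_pow_eq_map hAT
  have hT : (T : End F V).charpoly.roots = (s.map Prod.snd).map Units.val := by
    simpa using hs 0 1
  have hmap {m : ℕ} {g : (End F V)ˣ} (h : SemiconjBy g (A ^ m * T) T) :
      s.map (fun p => p.1 ^ m * p.2) = s.map Prod.snd := by
    have hroots := hs m 1
    refine Multiset.map_injective Units.val_injective (Eq.trans ?_ hT)
    rw [← charpoly_eq_of_semiconjBy (SemiconjBy.units_val h)]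
    simpa using hroots.symm
  have hfin {p : Fˣ × Fˣ} (hp : p ∈ s) : IsOfFinOrder p.1 :=
    isOfFinOrder_of_map_mul_snd_eq (by simpa using hmap (m := 1) (by rwa [pow_one])) (hmap hC) hp
  refine ⟨(s.map fun p => orderOf p.1).prod, ?_, ?_⟩
  · refine Multiset.prod_ne_zero fun h₀ => ?_
    obtain ⟨p, hp, hp₀⟩ := Multiset.mem_map.1 h₀
    exact (hfin hp).orderOf_pos.ne' hp₀
  · refine isNilpotent_sub_one_of_charpoly_roots fun μ hμ => ?_
    have hroots := hs (s.map fun p => orderOf p.1).prod 0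
    simp only [pow_zero, mul_one] at hroots
    rw [hroots, Multiset.map_map] at hμ
    obtain ⟨p, hp, rfl⟩ := Multiset.mem_map.1 hμ
    have : p.1 ^ (s.map fun p => orderOf p.1).prod = 1 :=
      orderOf_dvd_iff_pow_eq_one.1 (Multiset.dvd_prod (Multiset.mem_map_of_mem _ hp))
    simp [this]

end JointEigenvalues

lemma exists_pow_eq_one_of_isNilpotent_sub_one {R : Type*} [Ring R] (p : ℕ) [Fact p.Prime]
    [CharP R p] {x : R} (hx : IsNilpotent (x - 1)) : ∃ k : ℕ, x ^ p ^ k = 1 := by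
  obtain ⟨k, hk⟩ := hx
  have := sub_pow_char_pow_of_commute p k (Commute.one_right x)
  rw [one_pow, pow_eq_zero_of_le (Nat.lt_pow_self (Fact.out : p.Prime).one_lt).le hk] at this
  exact ⟨k, sub_eq_zero.1 this.symm⟩

lemma exists_units_pow_eq_one_of_two_eq_zero {F E : Type*} [Field F] [Ring E] [Algebra F E]
    (h2 : (2 : F) = 0) {u : Eˣ} (hu : IsNilpotent ((u : E) - 1)) : ∃ N ≠ 0, u ^ N = 1 := by
  cases subsingleton_or_nontrivial E
  · exact ⟨1, one_ne_zero, Subsingleton.elim _ _⟩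
  have : CharP F 2 := CharTwo.of_one_ne_zero_of_two_eq_zero one_ne_zero h2
  have : CharP E 2 := charP_of_injective_algebraMap (algebraMap F E).injective 2
  obtain ⟨k, hk⟩ := exists_pow_eq_one_of_isNilpotent_sub_one 2 hu
  exact ⟨2 ^ k, by positivity, Units.ext (by simpa using hk)⟩

section Representations

variable {F V : Type*} [Field F] [AddCommGroup V] [Module F V] [FiniteDimensional F V]

lemma doubleCommutator_eq_one_of_isNilpotent_sub_one [PerfectField F] (h2 : (2 : F) ≠ 0)
    (hV : finrank F V ≤ 4) {A T B C : (End F V)ˣ}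
    (hA : IsNilpotent ((A : End F V) - 1)) (hAT : Commute A T)
    (hB : SemiconjBy B (A * T) T) (hC : SemiconjBy C (A ^ 2 * T) T) :
    doubleCommutator A B C = 1 := by
  obtain ⟨U, hU, hcomm, hsemi⟩ := exists_unipotent_part T
  have hA2 : IsNilpotent ((A : End F V) ^ 2 - 1) := by
    rw [sq, mul_self_sub_one]
    exact Commute.isNilpotent_mul_left
      (.sub_right (.add_left (.refl _) (.one_left _)) (.one_right _)) hA
  have hBU := hsemi A B hAT.units_val hA (SemiconjBy.units_val hB)
  have hCU := hsemi _ C (hAT.units_val.pow_left 2) hA2 (by simpa using SemiconjBy.units_val hC)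
  exact (HasLoweringFlag.of_isNilpotent_sub_one h2 hV (hcomm _ hAT.units_val) hA hU
    hBU hCU).doubleCommutator_eq_one

lemma exists_doubleCommutator_pow_eq_one [IsAlgClosed F] (hV : finrank F V ≤ 4)
    {A T B C : (End F V)ˣ} (hAT : Commute A T) (hB : SemiconjBy B (A * T) T)
    (hC : SemiconjBy C (A ^ 2 * T) T) : ∃ N ≠ 0, doubleCommutator (A ^ N) B C = 1 := by
  obtain ⟨N, hN, hA⟩ := exists_isNilpotent_pow_sub_one hAT hB hC
  have hB' : SemiconjBy B (A ^ N * T ^ N) (T ^ N) := hAT.mul_pow N ▸ hB.pow_right N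
  have hC' : SemiconjBy C ((A ^ N) ^ 2 * T ^ N) (T ^ N) := by
    rw [pow_right_comm, ← (hAT.pow_left 2).mul_pow]
    exact hC.pow_right N
  rw [← Units.val_pow_eq_pow_val] at hA
  by_cases h2 : (2 : F) = 0
  · obtain ⟨M, hM, hAM⟩ := exists_units_pow_eq_one_of_two_eq_zero h2 hA
    exact ⟨N * M, mul_ne_zero hN hM, by rw [pow_mul, hAM, doubleCommutator_one_left]⟩
  · exact ⟨N, hN,
      doubleCommutator_eq_one_of_isNilpotent_sub_one h2 hV hA (hAT.pow_pow N N) hB' hC'⟩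

lemma semiconjBy_inr_inl {H : Type*} [Group H] (α : MulAut H) (g : H) :
    SemiconjBy (SemidirectProduct.inr (φ := zpowersHom _ α) (.ofAdd (1 : ℤ)))
      (SemidirectProduct.inl g) (SemidirectProduct.inl (α g)) := by
  have h := SemidirectProduct.inl_aut (φ := zpowersHom _ α) (.ofAdd 1) g
  rw [zpowersHom_apply, toAdd_ofAdd, zpow_one, map_inv] at h
  rw [SemiconjBy, h, inv_mul_cancel_right]

lemma not_injective_of_finrank_le_four [IsAlgClosed F] {α : MulAut (FreeGroup (Fin 3))}
    (ha : α (.of 0) = .of 0) (hb : α (.of 1) = .of 1 * .of 0)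
    (hc : α (.of 2) = .of 2 * .of 0 ^ 2) (hV : finrank F V ≤ 4)
    (σ : FreeGroup (Fin 3) ⋊[zpowersHom _ α] Multiplicative ℤ →* (End F V)ˣ) :
    ¬ Function.Injective σ := by
  intro hσ
  let τ := σ.comp SemidirectProduct.inl
  let T := σ (.inr (.ofAdd 1))
  have hτ : Function.Injective τ := hσ.comp SemidirectProduct.inl_injective
  have hrel (g) : T * τ g = τ (α g) * T := (semiconjBy_inr_inl α g).map σ
  have hA : Commute (τ (.of 0)) T := by rw [Commute, SemiconjBy, hrel, ha]
  have hB : SemiconjBy (τ (.of 1)) (τ (.of 0) * T) T := by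
    rw [SemiconjBy, hrel, hb, map_mul, mul_assoc]
  have hC : SemiconjBy (τ (.of 2)) (τ (.of 0) ^ 2 * T) T := by
    rw [SemiconjBy, hrel, hc, map_mul, map_pow, mul_assoc]
  obtain ⟨N, hN, h⟩ := exists_doubleCommutator_pow_eq_one hV hA hB hC
  rw [← map_pow, ← map_doubleCommutator] at h
  exact doubleCommutator_of_pow_ne_one hN ((map_eq_one_iff τ hτ).1 h)

end Representations

end Gersten

theorem gersten_group_no_faithful_rep_dim_le_four_general
    (α : MulAut (FreeGroup (Fin 3)))
    (ha : α (FreeGroup.of 0) = FreeGroup.of 0)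
    (hb : α (FreeGroup.of 1) = FreeGroup.of 1 * FreeGroup.of 0)
    (hc : α (FreeGroup.of 2) = FreeGroup.of 2 * FreeGroup.of 0 ^ 2)
    {R : Type*} [CommRing R] [IsDomain R] {n : Type*} [Fintype n] [DecidableEq n]
    (hn : Fintype.card n ≤ 4)
    (ρ : (FreeGroup (Fin 3) ⋊[zpowersHom (MulAut (FreeGroup (Fin 3))) α]
      Multiplicative ℤ) →* GL n R) :
    ¬ Function.Injective ρ := by
  let K := AlgebraicClosure (FractionRing R)
  let i : R →+* K := (algebraMap (FractionRing R) K).comp (algebraMap R (FractionRing R))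
  have hi : Function.Injective i :=
    (algebraMap (FractionRing R) K).injective.comp (IsFractionRing.injective R _)
  let f : GL n R →* GL n K := Matrix.GeneralLinearGroup.map i
  have hf : Function.Injective f := Units.map_injective (Matrix.map_injective hi)
  let e : GL n K →* (Module.End K (n → K))ˣ := Units.map (Matrix.toLinAlgEquiv' (R := K) (n := n))
  have he : Function.Injective e := Units.map_injective Matrix.toLinAlgEquiv'.injective
  exact fun hρ => Gersten.not_injective_of_finrank_le_four ha hb hc (by simpa using hn)
    (e.comp (f.comp ρ)) (he.comp (hf.comp hρ))

/-- The Gersten group `F₃ ⋊_α ℤ` (where `α(a) = a`,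
`α(b) = ba`, `α(c) = ca²`, with `a = of 0`, `b = of 1`, `c = of 2`) admits no
injective homomorphism into `GL(4,ℂ)`; consequently it admits no injective
homomorphism into `GL(d,F)` for any field `F` and any `d ≤ 4`. -/
theorem gersten_group_no_faithful_rep_dim_le_four
    (α : MulAut (FreeGroup (Fin 3)))
    (ha : α (FreeGroup.of 0) = FreeGroup.of 0)
    (hb : α (FreeGroup.of 1) = FreeGroup.of 1 * FreeGroup.of 0)
    (hc : α (FreeGroup.of 2) = FreeGroup.of 2 * FreeGroup.of 0 ^ 2) :
    (¬ ∃ ρ : (FreeGroup (Fin 3) ⋊[zpowersHom (MulAut (FreeGroup (Fin 3))) α]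
        Multiplicative ℤ) →* GL (Fin 4) ℂ,
      Function.Injective ρ) ∧
    (∀ (F : Type) [Field F] (d : ℕ), d ≤ 4 →
      ¬ ∃ ρ : (FreeGroup (Fin 3) ⋊[zpowersHom (MulAut (FreeGroup (Fin 3))) α]
          Multiplicative ℤ) →* GL (Fin d) F,
        Function.Injective ρ) := by
  have hn {d : ℕ} (hd : d ≤ 4) : Fintype.card (Fin d) ≤ 4 := (Fintype.card_fin d).trans_le hd
  exact ⟨fun ⟨ρ, hρ⟩ =>
      gersten_group_no_faithful_rep_dim_le_four_general α ha hb hc (hn le_rfl) ρ hρ,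
    fun F _ d hd ⟨ρ, hρ⟩ =>
      gersten_group_no_faithful_rep_dim_le_four_general α ha hb hc (hn hd) ρ hρ⟩
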